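/- arXiv:1906.02233 — 3 statements merged into one kernel-verified Lean document; each statement's English description precedes it below -/
import Mathlib

section
/- Let A, A₁, A₂ : ℂ × ℂ → ℂ be analytic on all of ℂ² with A(t,z) = A₁(t,z)²·A₂(t,z) for all (t,z), suppose A is not identically zero, and suppose A₁(t₀, z₀) = 0 for some point (t₀, z₀) ∈ ℂ². Then A cannot satisfy the heat equation; that is, there exists (t,z) ∈ ℂ² with ∂_t A(t,z) ≠ ∂_z² A(t,z). -/
open Filter MeasureTheory

namespace SqCal
open Polynomial

noncomputable def Dt (f : ℂ × ℂ → ℂ) : ℂ × ℂ → ℂ := fun p => fderiv ℂ f p (1, 0)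
noncomputable def Dz (f : ℂ × ℂ → ℂ) : ℂ × ℂ → ℂ := fun p => fderiv ℂ f p (0, 1)

abbrev Ent (f : ℂ × ℂ → ℂ) : Prop := AnalyticOnNhd ℂ f Set.univ

lemma Ent.dir {f : ℂ × ℂ → ℂ} (hf : Ent f) (v : ℂ × ℂ) : Ent (fun p => fderiv ℂ f p v) := by
  intro p hp
  exact ((ContinuousLinearMap.apply ℂ ℂ v).analyticAt _).comp (hf.fderiv p hp)

lemma Ent.dt {f : ℂ × ℂ → ℂ} (hf : Ent f) : Ent (Dt f) := hf.dir _
lemma Ent.dz {f : ℂ × ℂ → ℂ} (hf : Ent f) : Ent (Dz f) := hf.dir _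

lemma Ent.diff {f : ℂ × ℂ → ℂ} (hf : Ent f) : Differentiable ℂ f :=
  fun p => (hf p trivial).differentiableAt

lemma dz_dt {f : ℂ × ℂ → ℂ} (hf : Ent f) : Dz (Dt f) = Dt (Dz f) := by
  funext p
  have hs : IsSymmSndFDerivAt ℂ f p :=
    ((hf p trivial).contDiffAt (n := ⊤)).isSymmSndFDerivAt le_top
  have hd : DifferentiableAt ℂ (fderiv ℂ f) p := (hf.fderiv p trivial).differentiableAt
  have key : ∀ v w : ℂ × ℂ, fderiv ℂ (fun q => fderiv ℂ f q v) p w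
      = fderiv ℂ (fderiv ℂ f) p w v := by
    intro v w
    rw [fderiv_clm_apply hd (differentiableAt_const v)]
    simp
  unfold Dz Dt
  rw [key, key]
  exact hs _ _

variable (t₀ z₀ : ℂ)

/-- the parabolic curve -/
def cv (f : ℂ × ℂ → ℂ) (w : ℂ) : ℂ → ℂ := fun e => f (t₀ + e ^ 2, z₀ + w * e)

lemma cv_analytic {f : ℂ × ℂ → ℂ} (hf : Ent f) (w e : ℂ) : AnalyticAt ℂ (cv t₀ z₀ f w) e := by
  have h : AnalyticAt ℂ (fun e : ℂ => (t₀ + e ^ 2, z₀ + w * e)) e := by fun_prop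
  exact AnalyticAt.comp (g := f) (f := fun e : ℂ => (t₀ + e ^ 2, z₀ + w * e))
    (hf (t₀ + e ^ 2, z₀ + w * e) trivial) h

lemma cv_deriv {f : ℂ × ℂ → ℂ} (hf : Ent f) (w : ℂ) :
    deriv (cv t₀ z₀ f w) =
      fun e => 2 * (e * cv t₀ z₀ (Dt f) w e) + w * cv t₀ z₀ (Dz f) w e := by
  funext e
  have h1 : HasDerivAt (fun e : ℂ => (t₀ + e ^ 2, z₀ + w * e)) (2 * e, w) e := by
    refine HasDerivAt.prodMk ?_ ?_
    · simpa using (hasDerivAt_pow 2 e).const_add t₀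
    · simpa using ((hasDerivAt_id e).const_mul w).const_add z₀
  have h2 := (hf.diff (t₀ + e ^ 2, z₀ + w * e)).hasFDerivAt.comp_hasDerivAt e h1
  have h3 : ((2 * e, w) : ℂ × ℂ) = (2 * e) • (1, 0) + w • (0, 1) := by simp
  rw [h3, map_add, map_smul, map_smul] at h2
  refine h2.deriv.trans ?_
  simp [cv, Dt, Dz, mul_assoc]

lemma iter_id_mul {h : ℂ → ℂ} (hh : AnalyticAt ℂ h 0) (N : ℕ) :
    iteratedDeriv N (fun e => e * h e) 0 = N * iteratedDeriv (N - 1) h 0 := by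
  rw [iteratedDeriv_fun_mul (f := fun e => e) contDiffAt_id hh.contDiffAt]
  rcases N with _ | N
  · simp
  rw [Finset.sum_eq_single 1]
  · simp [iteratedDeriv_one]
  · intro i _ hi
    rcases i with _ | _ | i
    · simp
    · simp at hi
    · have : iteratedDeriv (i + 1 + 1) (fun e : ℂ => e) 0 = 0 := by
        rw [iteratedDeriv_succ']
        simp [iteratedDeriv_const]
      simp [this]
  · simp

noncomputable def T : ℕ → (ℂ × ℂ → ℂ) → ℂ[X]
  | 0, f => C (f (t₀, z₀))
  | 1, f => X * T 0 (Dz f)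
  | (n + 2), f => (2 * ((n : ℂ[X]) + 1)) * T n (Dt f) + X * T (n + 1) (Dz f)

lemma T_eval (N : ℕ) : ∀ {f : ℂ × ℂ → ℂ}, Ent f → ∀ w : ℂ,
    (T t₀ z₀ N f).eval w = iteratedDeriv N (cv t₀ z₀ f w) 0 := by
  induction N using Nat.strong_induction_on with
  | _ N ih =>
    intro f hf w
    have step : ∀ n, iteratedDeriv (n + 1) (cv t₀ z₀ f w) 0
        = 2 * (n * iteratedDeriv (n - 1) (cv t₀ z₀ (Dt f) w) 0)
          + w * iteratedDeriv n (cv t₀ z₀ (Dz f) w) 0 := by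
      intro n
      have a1 := cv_analytic t₀ z₀ hf.dt w 0
      have a2 := cv_analytic t₀ z₀ hf.dz w 0
      have a3 : AnalyticAt ℂ (fun e => e * cv t₀ z₀ (Dt f) w e) 0 := analyticAt_id.mul a1
      rw [iteratedDeriv_succ', cv_deriv t₀ z₀ hf,
        iteratedDeriv_fun_add (f := fun e => 2 * (e * cv t₀ z₀ (Dt f) w e))
          (g := fun e => w * cv t₀ z₀ (Dz f) w e) (analyticAt_const.mul a3).contDiffAt
          (analyticAt_const.mul a2).contDiffAt,
        iteratedDeriv_const_mul _ a3.contDiffAt, iteratedDeriv_const_mul _ a2.contDiffAt,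
        iter_id_mul a1]
    rcases N with _ | _ | n
    · simp [T, cv]
    · rw [step 0]
      simp [T, cv]
      ring
    · rw [step (n + 1), T]
      simp only [eval_add, eval_mul, eval_X, ih n (by omega) hf.dt, ih (n + 1) (by omega) hf.dz]
      simp [mul_assoc]

lemma T_natDegree (N : ℕ) : ∀ (f : ℂ × ℂ → ℂ), (T t₀ z₀ N f).natDegree ≤ N := by
  induction N using Nat.strong_induction_on with
  | _ N ih =>
    intro f
    rcases N with _ | _ | n
    · simp [T]
    · rw [T]
      refine natDegree_mul_le.trans ?_
      have := ih 0 (by omega) (Dz f)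
      have := natDegree_X_le (R := ℂ)
      omega
    · rw [T]
      refine natDegree_add_le_of_degree_le ?_ ?_
      · have e : (2 * ((n : ℂ[X]) + 1)) = C (2 * ((n : ℂ) + 1)) := by
          rw [map_mul, map_add, map_ofNat, map_natCast, map_one]
        rw [e]
        exact (natDegree_C_mul_le _ _).trans ((ih n (by omega) _).trans (by omega))
      · refine natDegree_mul_le.trans ?_
        have := ih (n + 1) (by omega) (Dz f)
        have := natDegree_X_le (R := ℂ)
        omega

lemma T_deriv (N : ℕ) : ∀ {f : ℂ × ℂ → ℂ}, Ent f →
    derivative (T t₀ z₀ N f) = N * T t₀ z₀ (N - 1) (Dz f) := by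
  induction N using Nat.strong_induction_on with
  | _ N ih =>
    intro f hf
    rcases N with _ | _ | n
    · simp [T]
    · simp [T]
    · have e : (2 * ((n : ℂ[X]) + 1)) = C (2 * ((n : ℂ) + 1)) := by
          rw [map_mul, map_add, map_ofNat, map_natCast, map_one]
      rw [T, derivative_add, e, derivative_C_mul, derivative_mul, derivative_X, ← e,
        ih n (by omega) hf.dt, ih (n + 1) (by omega) hf.dz, dz_dt hf]
      rcases n with _ | n
      · simp [T]
        ring
      · simp only [Nat.add_sub_cancel, Nat.succ_sub_one]
        rw [show n + 1 + 1 = n + 2 from rfl, T]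
        push_cast
        ring

lemma T_ode {f : ℂ × ℂ → ℂ} (hf : Ent f) (heat : Dt f = Dz (Dz f)) (N : ℕ) :
    (N : ℂ[X]) * T t₀ z₀ N f
      = 2 * derivative (derivative (T t₀ z₀ N f)) + X * derivative (T t₀ z₀ N f) := by
  rcases N with _ | _ | n
  · simp [T]
  · simp [T]
  · rw [T_deriv t₀ z₀ _ hf]
    have e : (((n + 2 : ℕ) : ℂ[X])) = C ((n + 2 : ℕ) : ℂ) := (map_natCast C _).symm
    rw [e, derivative_C_mul, ← e, T_deriv t₀ z₀ _ hf.dz, T, heat]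
    simp only [Nat.succ_sub_one, Nat.add_sub_cancel]
    push_cast
    ring

noncomputable def Phi (f : ℂ × ℂ → ℂ) : PowerSeries ℂ[X] :=
  PowerSeries.mk fun N => C ((N.factorial : ℂ)⁻¹) * T t₀ z₀ N f

lemma Phi_mul {f g : ℂ × ℂ → ℂ} (hf : Ent f) (hg : Ent g) :
    Phi t₀ z₀ (fun p => f p * g p) = Phi t₀ z₀ f * Phi t₀ z₀ g := by
  ext1 N
  rw [PowerSeries.coeff_mul, Finset.Nat.sum_antidiagonal_eq_sum_range_succ_mk]
  simp only [Phi, PowerSeries.coeff_mk]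
  apply Polynomial.funext
  intro w
  have hfg : Ent (fun p => f p * g p) := fun p hp => (hf p hp).mul (hg p hp)
  rw [eval_finsetSum]
  simp only [eval_mul, eval_C, T_eval t₀ z₀ _ hf, T_eval t₀ z₀ _ hg, T_eval t₀ z₀ _ hfg]
  have e : cv t₀ z₀ (fun p => f p * g p) w = fun e => cv t₀ z₀ f w e * cv t₀ z₀ g w e := rfl
  rw [e, iteratedDeriv_fun_mul (cv_analytic t₀ z₀ hf w 0).contDiffAt
    (cv_analytic t₀ z₀ hg w 0).contDiffAt, Finset.mul_sum]
  refine Finset.sum_congr rfl fun i hi => ?_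
  have hi' : i ≤ N := by simpa [Nat.lt_succ_iff] using hi
  rw [Nat.cast_choose ℂ hi']
  have := Nat.cast_ne_zero (R := ℂ).2 N.factorial_ne_zero
  field_simp

lemma Phi_ne_zero {f : ℂ × ℂ → ℂ} (hf : Ent f) (hne : ∃ p, f p ≠ 0) : Phi t₀ z₀ f ≠ 0 := by
  intro h0
  have hT : ∀ N, T t₀ z₀ N f = 0 := by
    intro N
    have := congrArg (PowerSeries.coeff N) h0
    simpa [Phi, Nat.factorial_ne_zero] using this
  have hcv : ∀ w e, cv t₀ z₀ f w e = 0 := by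
    intro w e
    rw [← Complex.taylorSeries_eq_of_entire' 0 e
      (fun x => (cv_analytic t₀ z₀ hf w x).differentiableAt)]
    simp [← T_eval t₀ z₀ _ hf, hT]
  have hoff : ∀ t z, t ≠ t₀ → f (t, z) = 0 := by
    intro t z ht
    obtain ⟨e, he⟩ := IsAlgClosed.exists_pow_nat_eq (t - t₀) (n := 2) (by norm_num)
    have he0 : e ≠ 0 := by
      rintro rfl
      apply ht
      rw [← sub_eq_zero, ← he]
      simp
    have := hcv ((z - z₀) / e) e
    simp only [cv, he] at this
    rw [div_mul_cancel₀ _ he0] at this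
    simpa using this
  obtain ⟨⟨t, z⟩, hp⟩ := hne
  apply hp
  have hc : Continuous (fun s : ℂ => f (s, z)) := hf.diff.continuous.comp (by fun_prop)
  have hd : Dense ({t₀}ᶜ : Set ℂ) := dense_compl_singleton t₀
  have := Continuous.ext_on hd hc continuous_const (fun s hs => hoff s z hs)
  exact congrFun this t

lemma ode_contra {g : ℂ[X]} {n : ℕ} (hg : g ≠ 0)
    (ode : (n : ℂ[X]) * g = 2 * derivative (derivative g) + X * derivative g) :
    g.natDegree = n ∧ ∀ a, ¬ (X - C a) ^ 2 ∣ g := by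
  constructor
  · have h := congrArg (fun p => coeff p g.natDegree) ode
    have e2 : (2 : ℂ[X]) = C 2 := (map_ofNat C 2).symm
    have en : (n : ℂ[X]) = C (n : ℂ) := by simp
    have hz1 : coeff g (g.natDegree + 1 + 1) = 0 := coeff_eq_zero_of_natDegree_lt (by omega)
    have hX : coeff (X * derivative g) g.natDegree = g.natDegree * coeff g g.natDegree := by
      rcases hd : g.natDegree with _ | d
      · simp
      · rw [coeff_X_mul, coeff_derivative]
        push_cast
        ring
    simp only [coeff_add, hX, e2, en, coeff_C_mul, coeff_derivative, hz1] at h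
    have hl : coeff g g.natDegree ≠ 0 := by simpa using hg
    have : (n : ℂ) = g.natDegree := by
      apply mul_right_cancel₀ hl
      simpa using h
    exact_mod_cast this.symm
  · intro a hdiv
    have hr : 2 ≤ rootMultiplicity a g := (le_rootMultiplicity_iff hg).2 hdiv
    have r1 : g.IsRoot a := (rootMultiplicity_pos hg).1 (by omega)
    have m1 := derivative_rootMultiplicity_of_root r1
    have hg1 : derivative g ≠ 0 := by
      intro h
      rw [h] at m1
      simp at m1
      omega
    have r2 : (derivative g).IsRoot a := (rootMultiplicity_pos hg1).1 (by omega)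
    have m2 := derivative_rootMultiplicity_of_root r2
    have hg2 : derivative (derivative g) ≠ 0 := by
      intro h
      have := derivative_eq_zero.1 h
      rw [eq_C_of_natDegree_eq_zero this] at r2 hg1
      simp at r2 hg1
      exact hg1 r2
    have d1 : (X - C a) ^ (rootMultiplicity a g - 1) ∣ g :=
      (pow_dvd_pow _ (by omega)).trans (pow_rootMultiplicity_dvd g a)
    have d2 : (X - C a) ^ (rootMultiplicity a g - 1) ∣ derivative g := by
      rw [← m1]
      exact pow_rootMultiplicity_dvd _ a
    have d3 : (X - C a) ^ (rootMultiplicity a g - 1) ∣ C 2 * derivative (derivative g) := by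
      have : C 2 * derivative (derivative g) = (n : ℂ[X]) * g - X * derivative g := by
        rw [ode, map_ofNat]
        ring
      rw [this]
      exact dvd_sub (d1.mul_left _) (d2.mul_left _)
    have d4 : (X - C a) ^ (rootMultiplicity a g - 1) ∣ derivative (derivative g) := by
      have := d3.mul_left (C (2⁻¹ : ℂ))
      rwa [← mul_assoc, ← C_mul, inv_mul_cancel₀ two_ne_zero, C_1, one_mul] at this
    have := (le_rootMultiplicity_iff hg2).2 d4
    omega

lemma lead_mul {R : Type*} [CommRing R] [IsDomain R] {a b : PowerSeries R} (ha : a ≠ 0)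
    (hb : b ≠ 0) :
    (a * b).order.toNat = a.order.toNat + b.order.toNat ∧
    PowerSeries.coeff (a * b).order.toNat (a * b)
      = PowerSeries.coeff a.order.toNat a * PowerSeries.coeff b.order.toNat b := by
  have h1 : (a * b).order.toNat = a.order.toNat + b.order.toNat := by
    rw [PowerSeries.order_mul, ENat.toNat_add (by simpa using ha) (by simpa using hb)]
  refine ⟨h1, ?_⟩
  rw [h1]
  have hab : a * b = PowerSeries.X ^ (a.order.toNat + b.order.toNat)
      * (a.divXPowOrder * b.divXPowOrder) := by
    conv_lhs => rw [← PowerSeries.X_pow_order_mul_divXPowOrder (f := a),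
      ← PowerSeries.X_pow_order_mul_divXPowOrder (f := b)]
    rw [pow_add]
    ring
  have := PowerSeries.coeff_X_pow_mul (a.divXPowOrder * b.divXPowOrder)
    (a.order.toNat + b.order.toNat) 0
  rw [zero_add] at this
  rw [hab, this]
  simp [PowerSeries.constantCoeff_divXPowOrder]

end SqCal

open SqCal Polynomial

/-- If `A = A₁² · A₂` with `A, A₁, A₂` analytic on all of `ℂ²`, `A ≢ 0`,
and `A₁` vanishes somewhere, then `A` cannot satisfy the heat equation: at some point
`∂_t A ≠ ∂_z² A`. -/
theorem square_factor_not_caloric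
    (A A₁ A₂ : ℂ × ℂ → ℂ)
    (hA : AnalyticOnNhd ℂ A Set.univ)
    (hA₁ : AnalyticOnNhd ℂ A₁ Set.univ)
    (hA₂ : AnalyticOnNhd ℂ A₂ Set.univ)
    (hfac : ∀ p : ℂ × ℂ, A p = (A₁ p) ^ 2 * A₂ p)
    (hne : ∃ p : ℂ × ℂ, A p ≠ 0)
    (t₀ z₀ : ℂ) (hzero : A₁ (t₀, z₀) = 0) :
    ∃ t z : ℂ, deriv (fun s => A (s, z)) t ≠ iteratedDeriv 2 (fun w => A (t, w)) z := by
  by_contra hcon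
  push Not at hcon
  have heat : Dt A = Dz (Dz A) := by
    have hz : ∀ {f : ℂ × ℂ → ℂ}, Ent f → ∀ t, deriv (fun w => f (t, w)) = fun w => Dz f (t, w) := by
      intro f hf t
      funext z
      have h1 : HasDerivAt (fun w : ℂ => (t, w)) ((0 : ℂ), (1 : ℂ)) z :=
        (hasDerivAt_const z t).prodMk (hasDerivAt_id z)
      exact ((hf.diff (t, z)).hasFDerivAt.comp_hasDerivAt z h1).deriv
    funext p
    obtain ⟨t, z⟩ := p
    have h := hcon t z
    rw [iteratedDeriv_succ', iteratedDeriv_one, hz hA, hz (Ent.dz hA)] at h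
    refine Eq.trans ?_ h
    have h1 : HasDerivAt (fun s : ℂ => (s, z)) ((1 : ℂ), (0 : ℂ)) t :=
      (hasDerivAt_id t).prodMk (hasDerivAt_const t z)
    exact ((Ent.diff hA (t, z)).hasFDerivAt.comp_hasDerivAt t h1).deriv.symm
  have hPhi : Phi t₀ z₀ A = (Phi t₀ z₀ A₁ * Phi t₀ z₀ A₁) * Phi t₀ z₀ A₂ := by
    rw [← Phi_mul t₀ z₀ hA₁ hA₁, ← Phi_mul t₀ z₀ (f := fun p => A₁ p * A₁ p) (fun p hp => (hA₁ p hp).mul (hA₁ p hp)) hA₂]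
    congr 1
    funext p
    rw [hfac, sq]
  have h0 := Phi_ne_zero t₀ z₀ hA hne
  have h1 : Phi t₀ z₀ A₁ ≠ 0 := by
    intro h
    simp [hPhi, h] at h0
  have h2 : Phi t₀ z₀ A₂ ≠ 0 := by
    intro h
    simp [hPhi, h] at h0
  obtain ⟨o1, c1⟩ := lead_mul h1 h1
  obtain ⟨o2, c2⟩ := lead_mul (mul_ne_zero h1 h1) h2
  rw [← hPhi] at o2 c2
  rw [c1] at c2
  rw [o1] at o2
  have n0 := PowerSeries.coeff_order h0
  have n1 := PowerSeries.coeff_order h1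
  have n2 := PowerSeries.coeff_order h2
  have hm : (Phi t₀ z₀ A₁).order.toNat ≠ 0 := by
    intro h
    rw [h] at n1
    simp [Phi, T, hzero] at n1
  generalize (Phi t₀ z₀ A).order.toNat = n at *
  generalize (Phi t₀ z₀ A₁).order.toNat = m at *
  generalize (Phi t₀ z₀ A₂).order.toNat = k at *
  have deg : ∀ (N : ℕ) f, (PowerSeries.coeff N (Phi t₀ z₀ f)).natDegree ≤ N := by
    intro N f
    simp only [Phi, PowerSeries.coeff_mk]
    exact (natDegree_C_mul_le _ _).trans (T_natDegree t₀ z₀ N f)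
  have ode : (n : ℂ[X]) * PowerSeries.coeff n (Phi t₀ z₀ A)
      = 2 * derivative (derivative (PowerSeries.coeff n (Phi t₀ z₀ A)))
        + X * derivative (PowerSeries.coeff n (Phi t₀ z₀ A)) := by
    simp only [Phi, PowerSeries.coeff_mk, derivative_C_mul]
    have := T_ode t₀ z₀ hA heat n
    linear_combination C ((n.factorial : ℂ)⁻¹) * this
  obtain ⟨hd, hsq⟩ := ode_contra n0 ode
  have d1 := deg m A₁
  have d2 := deg k A₂
  rw [c2, natDegree_mul (mul_ne_zero n1 n1) n2, natDegree_mul n1 n1] at hd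
  have hdeg : (PowerSeries.coeff m (Phi t₀ z₀ A₁)).degree ≠ 0 := by
    intro h
    have := natDegree_eq_zero_iff_degree_le_zero.2 h.le
    omega
  obtain ⟨a, ha⟩ := IsAlgClosed.exists_root _ hdeg
  apply hsq a
  rw [c2, sq]
  exact (mul_dvd_mul (dvd_iff_isRoot.2 ha) (dvd_iff_isRoot.2 ha)).mul_right _
end

section
/- Let F : ℂ × ℂ → ℂ be an entire caloric function with F(t,z) ≠ 0 for every (t,z) ∈ ℂ². Then there exist constants c, λ ∈ ℂ with c ≠ 0 such that F(t,z) = c·e^{λ²t + λz} for all (t,z) ∈ ℂ². -/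
open Filter

/-- An entire caloric function: `F : ℂ × ℂ → ℂ` is analytic on all of `ℂ²` and satisfies
the heat equation `∂_t F(t,z) = ∂_z² F(t,z)` everywhere. -/
def IsEntireCaloric (F : ℂ × ℂ → ℂ) : Prop :=
  AnalyticOnNhd ℂ F Set.univ ∧
    ∀ t z : ℂ, deriv (fun s => F (s, z)) t = iteratedDeriv 2 (fun w => F (t, w)) z

/-- Directional derivative of `F` in direction `v`. -/
noncomputable def calDv (v : ℂ × ℂ) (F : ℂ × ℂ → ℂ) : ℂ × ℂ → ℂ := fun p => fderiv ℂ F p v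

lemma calDv_analytic (v : ℂ × ℂ) {F : ℂ × ℂ → ℂ} (hF : AnalyticOnNhd ℂ F Set.univ) :
    AnalyticOnNhd ℂ (calDv v F) Set.univ := by
  intro p hp
  exact ((ContinuousLinearMap.apply ℂ ℂ v).analyticAt _).comp (hF.fderiv p hp)

lemma calDv_t {F : ℂ × ℂ → ℂ} (hF : AnalyticOnNhd ℂ F Set.univ) (t z : ℂ) :
    HasDerivAt (fun s => F (s, z)) (calDv (1, 0) F (t, z)) t := by
  have h1 : HasFDerivAt F (fderiv ℂ F (t, z)) (t, z) :=
    (hF (t, z) trivial).differentiableAt.hasFDerivAt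
  have h2 : HasDerivAt (fun s : ℂ => (s, z)) ((1 : ℂ), (0 : ℂ)) t :=
    (hasDerivAt_id t).prodMk (hasDerivAt_const t z)
  exact h1.comp_hasDerivAt t h2

lemma calDv_z {F : ℂ × ℂ → ℂ} (hF : AnalyticOnNhd ℂ F Set.univ) (t z : ℂ) :
    HasDerivAt (fun s => F (t, s)) (calDv (0, 1) F (t, z)) z := by
  have h1 : HasFDerivAt F (fderiv ℂ F (t, z)) (t, z) :=
    (hF (t, z) trivial).differentiableAt.hasFDerivAt
  have h2 : HasDerivAt (fun s : ℂ => (t, s)) ((0 : ℂ), (1 : ℂ)) z :=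
    (hasDerivAt_const z t).prodMk (hasDerivAt_id z)
  exact h1.comp_hasDerivAt z h2

lemma calDv_iter_t (n : ℕ) : ∀ {F : ℂ × ℂ → ℂ} (_ : AnalyticOnNhd ℂ F Set.univ) (t z : ℂ),
    iteratedDeriv n (fun s => F (s, z)) t = (calDv (1, 0))^[n] F (t, z) := by
  induction n with
  | zero => intro F hF t z; simp
  | succ n ih =>
    intro F hF t z
    rw [iteratedDeriv_succ', Function.iterate_succ_apply, ← ih (calDv_analytic _ hF)]
    congr 1
    funext s
    exact (calDv_t hF s z).deriv

lemma calDv_iter_z (n : ℕ) : ∀ {F : ℂ × ℂ → ℂ} (_ : AnalyticOnNhd ℂ F Set.univ) (t z : ℂ),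
    iteratedDeriv n (fun s => F (t, s)) z = (calDv (0, 1))^[n] F (t, z) := by
  induction n with
  | zero => intro F hF t z; simp
  | succ n ih =>
    intro F hF t z
    rw [iteratedDeriv_succ', Function.iterate_succ_apply, ← ih (calDv_analytic _ hF)]
    congr 1
    funext s
    exact (calDv_z hF t s).deriv

lemma calDv_comm (v w : ℂ × ℂ) {F : ℂ × ℂ → ℂ} (hF : AnalyticOnNhd ℂ F Set.univ) :
    calDv v (calDv w F) = calDv w (calDv v F) := by
  have key : ∀ (v w : ℂ × ℂ) p, calDv v (calDv w F) p = fderiv ℂ (fderiv ℂ F) p v w := by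
    intro v w p
    have h : HasFDerivAt (fderiv ℂ F) (fderiv ℂ (fderiv ℂ F) p) p :=
      (hF.fderiv p trivial).differentiableAt.hasFDerivAt
    have h2 := ((ContinuousLinearMap.apply ℂ ℂ w).hasFDerivAt (x := fderiv ℂ F p)).comp p h
    have h3 : fderiv ℂ (calDv w F) p = _ := h2.fderiv
    simp [calDv] at h3 ⊢
    rw [h3]
    rfl
  funext p
  rw [key, key]
  have hs : IsSymmSndFDerivAt ℂ F p :=
    ContDiffAt.isSymmSndFDerivAt (n := ⊤) (hF p trivial).contDiffAt (by simp)
  exact hs v w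

/-- functional form of the heat equation -/
def CalH (F : ℂ × ℂ → ℂ) : Prop := calDv (1, 0) F = calDv (0, 1) (calDv (0, 1) F)

lemma calH_dv (v : ℂ × ℂ) {F : ℂ × ℂ → ℂ} (hF : AnalyticOnNhd ℂ F Set.univ) (h : CalH F) :
    CalH (calDv v F) := by
  unfold CalH at *
  rw [calDv_comm _ v hF, h, calDv_comm (0, 1) v hF,
    calDv_comm (0, 1) v (calDv_analytic _ hF)]

lemma calH_even (n : ℕ) : ∀ {F : ℂ × ℂ → ℂ} (_ : AnalyticOnNhd ℂ F Set.univ) (_ : CalH F),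
    (calDv (0, 1))^[2 * n] F = (calDv (1, 0))^[n] F := by
  induction n with
  | zero => intro F _ _; rfl
  | succ n ih =>
    intro F hF h
    rw [Function.iterate_succ_apply, ← ih (calDv_analytic _ hF) (calH_dv _ hF h),
      show 2 * (n + 1) = 2 * n + 1 + 1 by ring, Function.iterate_succ_apply,
      Function.iterate_succ_apply, ← h]

lemma cal_even_bound {F : ℂ × ℂ → ℂ} (hF : AnalyticOnNhd ℂ F Set.univ) (h : CalH F)
    (t : ℂ) (R : ℝ) (hR : 0 < R) :
    ∃ M : ℝ, 0 < M ∧ ∀ n : ℕ, ‖iteratedDeriv (2 * n) (fun s => F (t, s)) 0‖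
      ≤ n.factorial * M / R ^ n := by
  have hd : Differentiable ℂ (fun s => F (s, (0 : ℂ))) :=
    fun s => (calDv_t hF s 0).differentiableAt
  obtain ⟨C, hC⟩ := (isCompact_sphere t R).exists_bound_of_continuousOn hd.continuous.continuousOn
  refine ⟨max C 1, by positivity, fun n => ?_⟩
  rw [calDv_iter_z _ hF, calH_even n hF h, ← calDv_iter_t n hF]
  exact Complex.norm_iteratedDeriv_le_of_forall_mem_sphere_norm_le n hR hd.diffContOnCl
    fun z hz => (hC z hz).trans (le_max_left _ _)

lemma cal_growth {F : ℂ × ℂ → ℂ} (hF : AnalyticOnNhd ℂ F Set.univ) (h : CalH F)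
    (t : ℂ) (R : ℝ) (hR : 0 < R) :
    ∃ M : ℝ, 0 < M ∧ ∀ z : ℂ, ‖F (t, z)‖ ≤ M * (1 + ‖z‖) * Real.exp (‖z‖ ^ 2 / R) := by
  obtain ⟨M₁, hM₁, h₁⟩ := cal_even_bound hF h t R hR
  obtain ⟨M₂, hM₂, h₂⟩ := cal_even_bound (calDv_analytic (0, 1) hF) (calH_dv (0, 1) hF h) t R hR
  have h₂' : ∀ n : ℕ, ‖iteratedDeriv (2 * n + 1) (fun s => F (t, s)) 0‖
      ≤ n.factorial * M₂ / R ^ n := by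
    intro n
    rw [iteratedDeriv_succ', show deriv (fun s => F (t, s)) = fun s => calDv (0, 1) F (t, s) from
      funext fun s => (calDv_z hF t s).deriv]
    exact h₂ n
  refine ⟨M₁ + M₂, by positivity, fun z => ?_⟩
  have hd : Differentiable ℂ (fun s => F (t, s)) := fun s => (calDv_z hF t s).differentiableAt
  have hs := Complex.hasSum_taylorSeries_of_entire hd 0 z
  have hexp : HasSum (fun n : ℕ => (‖z‖ ^ 2 / R) ^ n / n.factorial) (Real.exp (‖z‖ ^ 2 / R)) := by
    rw [Real.exp_eq_exp_ℝ]
    exact NormedSpace.expSeries_div_hasSum_exp (‖z‖ ^ 2 / R)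
  have hfac : ∀ n : ℕ, (n.factorial : ℝ) * n.factorial ≤ (2 * n).factorial := by
    intro n
    have := Nat.le_of_dvd (Nat.factorial_pos _) (Nat.factorial_mul_factorial_dvd_factorial_add n n)
    rw [two_mul]
    exact_mod_cast this
  have hfac' : ∀ n : ℕ, (n.factorial : ℝ) * n.factorial ≤ (2 * n + 1).factorial := by
    intro n
    refine (hfac n).trans ?_
    exact_mod_cast Nat.factorial_le (Nat.le_succ _)
  have aux : ∀ (n : ℕ) (M d k : ℝ), 0 < M → d ≤ n.factorial * M / R ^ n →
      (n.factorial : ℝ) * n.factorial ≤ k →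
      k⁻¹ * (‖z‖ ^ (2 * n) * d) ≤ M * ((‖z‖ ^ 2 / R) ^ n / n.factorial) := by
    intro n M d k hM hd hk
    have hn : (0 : ℝ) < n.factorial := by exact_mod_cast Nat.factorial_pos n
    calc k⁻¹ * (‖z‖ ^ (2 * n) * d)
        ≤ (n.factorial * n.factorial : ℝ)⁻¹ * (‖z‖ ^ (2 * n) * (n.factorial * M / R ^ n)) := by
          have hk0 : 0 < k := lt_of_lt_of_le (by positivity) hk
          calc k⁻¹ * (‖z‖ ^ (2 * n) * d) ≤ k⁻¹ * (‖z‖ ^ (2 * n) * (n.factorial * M / R ^ n)) := by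
                gcongr
            _ ≤ _ := by gcongr
      _ = M * ((‖z‖ ^ 2 / R) ^ n / n.factorial) := by
          rw [div_pow, ← pow_mul]; field_simp
  set u : ℕ → ℂ := fun n => ((n.factorial : ℂ))⁻¹ • (z - 0) ^ n •
    iteratedDeriv n (fun s => F (t, s)) 0 with hu
  have hue : ∀ n, ‖u (2 * n)‖ ≤ M₁ * ((‖z‖ ^ 2 / R) ^ n / n.factorial) := by
    intro n
    have := aux n M₁ _ _ hM₁ (h₁ n) (hfac n)
    simpa [hu, norm_smul] using this
  have huo : ∀ n, ‖u (2 * n + 1)‖ ≤ ‖z‖ * M₂ * ((‖z‖ ^ 2 / R) ^ n / n.factorial) := by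
    intro n
    have := mul_le_mul_of_nonneg_left (aux n M₂ _ _ hM₂ (h₂' n) (hfac' n)) (norm_nonneg z)
    have e : ‖u (2 * n + 1)‖ = ‖z‖ * (((2 * n + 1).factorial : ℝ)⁻¹ * (‖z‖ ^ (2 * n) *
        ‖iteratedDeriv (2 * n + 1) (fun s => F (t, s)) 0‖)) := by
      simp only [hu, norm_smul, sub_zero, norm_pow, norm_inv, Complex.norm_natCast]
      ring
    rw [e, mul_assoc]
    exact this
  have s1 := hexp.mul_left M₁
  have s2 := hexp.mul_left (‖z‖ * M₂)
  have t1 : Summable fun n => u (2 * n) := Summable.of_norm_bounded s1.summable hue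
  have t2 : Summable fun n => u (2 * n + 1) := Summable.of_norm_bounded s2.summable huo
  have hF' : F (t, z) = ∑' n, u (2 * n) + ∑' n, u (2 * n + 1) := by
    rw [tsum_even_add_odd t1 t2]; exact hs.tsum_eq.symm
  rw [hF']
  have b1 := tsum_of_norm_bounded s1 hue
  have b2 := tsum_of_norm_bounded s2 huo
  refine (norm_add_le _ _).trans ((add_le_add b1 b2).trans ?_)
  rw [← add_mul]
  gcongr
  nlinarith [norm_nonneg z, mul_nonneg hM₁.le (norm_nonneg z)]

lemma cal_liouville {g : ℂ → ℂ} (hg : Differentiable ℂ g)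
    (hb : ∀ ε : ℝ, 0 < ε → ∃ C : ℝ, 0 < C ∧ ∀ z, (g z).re ≤ C + ‖z‖ + ε * ‖z‖ ^ 2) (w : ℂ) :
    iteratedDeriv 2 g w = 0 := by
  rw [← norm_le_zero_iff]
  refine le_of_forall_pos_le_add fun δ hδ => ?_
  rw [zero_add]
  obtain ⟨C, hC0, hC⟩ := hb (δ / 128) (by positivity)
  have hev : ∀ᶠ ρ : ℝ in atTop, ‖w‖ + 1 ≤ ρ ∧ 16 ≤ ρ * δ / 4 ∧ 4 * C + 6 * ‖g 0‖ ≤ ρ * δ / 4 := by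
    have hl : Tendsto (fun ρ : ℝ => ρ * δ / 4) atTop atTop :=
      (tendsto_id.atTop_mul_const hδ).atTop_div_const (by norm_num)
    exact (eventually_ge_atTop _).and
      ((hl.eventually_ge_atTop _).and (hl.eventually_ge_atTop _))
  obtain ⟨ρ, h1, h2, h3⟩ := hev.exists
  have hρ : 1 ≤ ρ := by linarith [norm_nonneg w]
  set M := C + 4 * ρ + δ / 128 * (4 * ρ) ^ 2 with hM
  have hM0 : 0 < M := by positivity
  have hsph : ∀ z ∈ Metric.sphere w ρ, ‖g z‖ ≤ 2 * M + 3 * ‖g 0‖ := by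
    intro z hz
    have hz' : ‖z‖ ≤ 2 * ρ := by
      rw [mem_sphere_iff_norm] at hz
      have := norm_add_le (z - w) w
      rw [sub_add_cancel] at this
      linarith
    have hbc := Complex.borelCaratheodory (f := g) (M := M) (R := 4 * ρ) (z := z) hM0
      hg.differentiableOn ?_ (by linarith) (by simp; linarith)
    · refine hbc.trans ?_
      have hp : 0 < 4 * ρ - ‖z‖ := by linarith
      apply add_le_add
      · rw [div_le_iff₀ hp]; nlinarith
      · rw [div_le_iff₀ hp]; nlinarith [norm_nonneg (g 0)]
    · intro x hx
      rw [mem_ball_zero_iff] at hx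
      refine (hC x).trans ?_
      rw [hM]
      gcongr
  have := Complex.norm_iteratedDeriv_le_of_forall_mem_sphere_norm_le 2 (by linarith : 0 < ρ)
    (hg.diffContOnCl (s := Metric.ball w ρ)) hsph
  refine this.trans ?_
  rw [div_le_iff₀ (by positivity), hM]
  simp only [Nat.factorial_two, Nat.cast_ofNat]
  nlinarith [mul_le_mul_of_nonneg_right h2 (by linarith : 0 ≤ ρ), mul_le_mul_of_nonneg_right h3 (by linarith : 0 ≤ ρ), mul_nonneg hC0.le (by linarith : 0 ≤ ρ - 1), mul_nonneg (norm_nonneg (g 0)) (by linarith : 0 ≤ ρ - 1)]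

lemma cal_exists_log {f : ℂ → ℂ} (hf : Differentiable ℂ f) (h0 : ∀ z, f z ≠ 0) :
    ∃ g : ℂ → ℂ, Differentiable ℂ g ∧ ∀ z, f z = Complex.exp (g z) := by
  have hd : Differentiable ℂ (fun z => deriv f z / f z) := by
    have : Differentiable ℂ (deriv f) :=
      differentiableOn_univ.1 (hf.differentiableOn.deriv isOpen_univ)
    exact this.div hf h0
  obtain ⟨g, hg0, hg⟩ := hd.isExactOn_univ.with_val_at 0 (Complex.log (f 0))
  have hg' : ∀ z, HasDerivAt g (deriv f z / f z) z := fun z => hg z trivial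
  refine ⟨g, fun z => (hg' z).differentiableAt, fun z => ?_⟩
  have hh : ∀ z, HasDerivAt (fun z => f z * Complex.exp (-g z)) 0 z := by
    intro z
    convert! (hf z).hasDerivAt.mul (hg' z).neg.cexp using 1
    have := h0 z
    field_simp
    ring
  have hc := is_const_of_deriv_eq_zero (fun z => (hh z).differentiableAt)
    (fun z => (hh z).deriv) z 0
  simp only [hg0, Complex.exp_neg, Complex.exp_log (h0 0)] at hc
  rw [mul_inv_cancel₀ (h0 0)] at hc
  field_simp at hc
  exact hc

lemma cal_exp_z {F : ℂ × ℂ → ℂ} (hF : AnalyticOnNhd ℂ F Set.univ) (h : CalH F)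
    (hne : ∀ t z : ℂ, F (t, z) ≠ 0) (t : ℂ) :
    ∃ b : ℂ, ∀ z, F (t, z) = F (t, 0) * Complex.exp (b * z) := by
  have hd : Differentiable ℂ (fun s => F (t, s)) := fun s => (calDv_z hF t s).differentiableAt
  obtain ⟨g, hg, hfg⟩ := cal_exists_log hd (hne t)
  have h2 : ∀ w, iteratedDeriv 2 g w = 0 := by
    refine cal_liouville hg fun ε hε => ?_
    obtain ⟨M, hM, hb⟩ := cal_growth hF h t ε⁻¹ (by positivity)
    refine ⟨|Real.log M| + 1, by positivity, fun z => ?_⟩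
    have := hb z
    rw [hfg z, Complex.norm_exp] at this
    have h3 : M * (1 + ‖z‖) * Real.exp (‖z‖ ^ 2 / ε⁻¹)
        ≤ Real.exp (Real.log M + ‖z‖ + ε * ‖z‖ ^ 2) := by
      rw [Real.exp_add, Real.exp_add, Real.exp_log hM, div_inv_eq_mul, mul_comm ε]
      gcongr
      linarith [Real.add_one_le_exp ‖z‖]
    have := Real.exp_le_exp.1 (this.trans h3)
    linarith [le_abs_self (Real.log M)]
  have hdg : Differentiable ℂ (deriv g) :=
    differentiableOn_univ.1 (hg.differentiableOn.deriv isOpen_univ)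
  have hb : ∀ z, deriv g z = deriv g 0 := fun z =>
    is_const_of_deriv_eq_zero hdg (fun w => by
      have := h2 w
      rwa [iteratedDeriv_succ, iteratedDeriv_one] at this) z 0
  have hh : ∀ z, HasDerivAt (fun z => g z - deriv g 0 * z) 0 z := by
    intro z
    convert! (hg z).hasDerivAt.sub ((hasDerivAt_id z).const_mul (deriv g 0)) using 1
    rw [hb z]; simp
  refine ⟨deriv g 0, fun z => ?_⟩
  have hc := is_const_of_deriv_eq_zero (fun z => (hh z).differentiableAt)
    (fun z => (hh z).deriv) z 0
  simp only [mul_zero, sub_zero] at hc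
  rw [hfg z, hfg 0, ← Complex.exp_add, ← hc]
  congr 1; ring

/-- An entire caloric function that never vanishes has the form
`F(t,z) = c e^{λ²t + λz}` for some constants `c ≠ 0` and `λ`. -/
theorem nonvanishing_caloric_is_exponential
    (F : ℂ × ℂ → ℂ) (hF : IsEntireCaloric F)
    (hne : ∀ t z : ℂ, F (t, z) ≠ 0) :
    ∃ c lam : ℂ, c ≠ 0 ∧
      ∀ t z : ℂ, F (t, z) = c * Complex.exp (lam ^ 2 * t + lam * z) := by
  obtain ⟨hA, hheat⟩ := hF
  have hH : CalH F := by
    funext ⟨t, z⟩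
    rw [← (calDv_t hA t z).deriv, hheat t z, calDv_iter_z 2 hA]
    rfl
  choose b hb using cal_exp_z hA hH hne
  have hz : ∀ t z, calDv (0, 1) F (t, z) = b t * F (t, z) := by
    intro t z
    have e : (fun s => F (t, s)) = fun s => F (t, 0) * Complex.exp (b t * s) := funext (hb t)
    have h1 := calDv_z hA t z
    rw [e] at h1
    have h2 := (((hasDerivAt_id z).const_mul (b t)).cexp).const_mul (F (t, 0))
    have := h1.unique h2
    rw [this, hb t z]
    simp; ring
  have hbd : ∀ t, DifferentiableAt ℂ b t := by
    intro t
    have e : b = fun t => calDv (0, 1) F (t, 0) / F (t, 0) := by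
      funext t
      rw [hz, mul_div_cancel_right₀ _ (hne t 0)]
    rw [e]
    exact (calDv_t (calDv_analytic _ hA) t 0).differentiableAt.div
      (calDv_t hA t 0).differentiableAt (hne t 0)
  have ht : ∀ t z, calDv (1, 0) F (t, z) = b t ^ 2 * F (t, z) := by
    intro t z
    rw [show calDv (1, 0) F = _ from hH]
    have h1 := calDv_z (calDv_analytic (0, 1) hA) t z
    have e : (fun s => calDv (0, 1) F (t, s)) = fun s => b t * F (t, s) := funext (hz t)
    rw [e] at h1
    rw [h1.unique ((calDv_z hA t z).const_mul (b t)), hz]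
    ring
  have hb0 : ∀ t, deriv b t = 0 := by
    intro t
    have e : (fun s => F (s, 1)) = fun s => F (s, 0) * Complex.exp (b s) :=
      funext fun s => by simpa using hb s 1
    have h1 := calDv_t hA t 1
    rw [e] at h1
    have h2 := h1.unique ((calDv_t hA t 0).mul (hbd t).hasDerivAt.cexp)
    rw [ht, ht, hb t 1, mul_one] at h2
    have h3 : F (t, 0) * (Complex.exp (b t) * deriv b t) = 0 := by linear_combination -h2
    simpa [hne t 0, Complex.exp_ne_zero] using h3
  have hbc : ∀ t, b t = b 0 := fun t => is_const_of_deriv_eq_zero hbd hb0 t 0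
  refine ⟨F (0, 0), b 0, hne 0 0, fun t z => ?_⟩
  have hh : ∀ t, HasDerivAt (fun s => F (s, 0) * Complex.exp (-(b 0 ^ 2 * s))) 0 t := by
    intro t
    convert! (calDv_t hA t 0).mul (((hasDerivAt_id t).const_mul (b 0 ^ 2)).neg.cexp) using 1
    rw [ht, hbc t]
    simp; ring
  have hc := is_const_of_deriv_eq_zero (fun z => (hh z).differentiableAt)
    (fun z => (hh z).deriv) t 0
  simp only [mul_zero, neg_zero, Complex.exp_zero, mul_one] at hc
  rw [hb t z, hbc t, ← hc, Complex.exp_add, Complex.exp_neg]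
  have := Complex.exp_ne_zero (b 0 ^ 2 * t)
  field_simp
end

section
/- Let F : ℂ × ℂ → ℂ be an entire caloric function which is even in its second variable, i.e. F(t, −z) = F(t, z) for all (t,z) ∈ ℂ². Then there exists a function Φ : ℂ × ℂ → ℂ, analytic on all of ℂ², such that F(t,z) = Φ(t, z²) for all (t,z) ∈ ℂ², and Φ satisfies the degenerate heat-type equation ∂_t Φ(t,μ) = 4μ·∂_μ² Φ(t,μ) + 2·∂_μ Φ(t,μ) for all (t,μ) ∈ ℂ², where ∂_μ denotes the derivative in the second variable. -/
open Filter

/-- Directional derivative. -/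
noncomputable def dirD (v : ℂ × ℂ) (F : ℂ × ℂ → ℂ) : ℂ × ℂ → ℂ := fun p => fderiv ℂ F p v

lemma dirD_analytic (v : ℂ × ℂ) {F : ℂ × ℂ → ℂ} (hF : AnalyticOnNhd ℂ F Set.univ) :
    AnalyticOnNhd ℂ (dirD v F) Set.univ := fun p hp =>
  ((ContinuousLinearMap.apply ℂ ℂ v).analyticAt _).comp (hF.fderiv p hp)

lemma dirD_comm (v w : ℂ × ℂ) {F : ℂ × ℂ → ℂ} (hF : AnalyticOnNhd ℂ F Set.univ) :
    dirD v (dirD w F) = dirD w (dirD v F) := by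
  have key : ∀ (a b p : ℂ × ℂ), dirD a (dirD b F) p = fderiv ℂ (fderiv ℂ F) p a b := by
    intro a b p
    have h1 : HasFDerivAt (fderiv ℂ F) (fderiv ℂ (fderiv ℂ F) p) p :=
      ((hF.fderiv p trivial).differentiableAt).hasFDerivAt
    have h2 := h1.clm_apply (hasFDerivAt_const b p)
    change fderiv ℂ (fun y => (fderiv ℂ F y) b) p a = _
    rw [h2.fderiv]
    simp
  funext p
  rw [key, key]
  have hs := ContDiffAt.isSymmSndFDerivAt (n := 2) ((hF p trivial).contDiffAt)
    (by rw [minSmoothness_of_isRCLikeNormedField])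
  exact hs.eq v w

lemma hasDerivAt_fst {F : ℂ × ℂ → ℂ} (hF : AnalyticOnNhd ℂ F Set.univ) (t z : ℂ) :
    HasDerivAt (fun s => F (s, z)) (dirD (1, 0) F (t, z)) t := by
  have h1 := (hF (t, z) trivial).differentiableAt.hasFDerivAt
  exact h1.comp_hasDerivAt t ((hasDerivAt_id t).prodMk (hasDerivAt_const t z))

lemma hasDerivAt_snd {F : ℂ × ℂ → ℂ} (hF : AnalyticOnNhd ℂ F Set.univ) (t z : ℂ) :
    HasDerivAt (fun w => F (t, w)) (dirD (0, 1) F (t, z)) z := by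
  have h1 := (hF (t, z) trivial).differentiableAt.hasFDerivAt
  exact h1.comp_hasDerivAt z ((hasDerivAt_const z t).prodMk (hasDerivAt_id z))

lemma deriv_fst_eq {F : ℂ × ℂ → ℂ} (hF : AnalyticOnNhd ℂ F Set.univ) (z : ℂ) :
    deriv (fun s => F (s, z)) = fun t => dirD (1, 0) F (t, z) :=
  funext fun t => (hasDerivAt_fst hF t z).deriv

lemma deriv_snd_eq {F : ℂ × ℂ → ℂ} (hF : AnalyticOnNhd ℂ F Set.univ) (t : ℂ) :
    deriv (fun w => F (t, w)) = fun z => dirD (0, 1) F (t, z) :=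
  funext fun z => (hasDerivAt_snd hF t z).deriv

lemma iter2_snd_eq {F : ℂ × ℂ → ℂ} (hF : AnalyticOnNhd ℂ F Set.univ) (t : ℂ) :
    iteratedDeriv 2 (fun w => F (t, w)) = fun z => dirD (0, 1) (dirD (0, 1) F) (t, z) := by
  rw [iteratedDeriv_succ, iteratedDeriv_one, deriv_snd_eq hF,
    deriv_snd_eq (dirD_analytic _ hF)]

lemma caloric_iter (k : ℕ) : ∀ (F : ℂ × ℂ → ℂ), AnalyticOnNhd ℂ F Set.univ →
    dirD (1, 0) F = dirD (0, 1) (dirD (0, 1) F) → ∀ t z : ℂ,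
    iteratedDeriv (2 * k) (fun w => F (t, w)) z = iteratedDeriv k (fun s => F (s, z)) t := by
  induction k with
  | zero => intro F _ _ t z; simp
  | succ k ih =>
    intro F hF hc t z
    have hA := dirD_analytic (1, 0) hF
    have hcal : dirD (1, 0) (dirD (1, 0) F) = dirD (0, 1) (dirD (0, 1) (dirD (1, 0) F)) := by
      conv_lhs => rw [hc]
      rw [dirD_comm _ _ (dirD_analytic _ hF), dirD_comm (1, 0) (0, 1) hF]
    have := ih _ hA hcal t z
    rw [show 2 * (k + 1) = (2 * k + 1) + 1 by ring, iteratedDeriv_succ', iteratedDeriv_succ',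
      iteratedDeriv_succ', deriv_snd_eq hF, deriv_snd_eq (dirD_analytic _ hF), deriv_fst_eq hF,
      ← this, hc]

/-- The monomial `x^i y^(N-i)` as a multilinear map. -/
noncomputable def monoM (N i : ℕ) : ContinuousMultilinearMap ℂ (fun _ : Fin N => ℂ × ℂ) ℂ :=
  (ContinuousMultilinearMap.mkPiAlgebra ℂ (Fin N) ℂ).compContinuousLinearMap
    (fun a => if (a : ℕ) < i then ContinuousLinearMap.fst ℂ ℂ ℂ else ContinuousLinearMap.snd ℂ ℂ ℂ)

lemma monoM_norm (N i : ℕ) : ‖monoM N i‖ ≤ 1 := by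
  refine (ContinuousMultilinearMap.norm_compContinuousLinearMap_le _ _).trans ?_
  rw [ContinuousMultilinearMap.norm_mkPiAlgebra, one_mul]
  refine Finset.prod_le_one (fun _ _ => norm_nonneg _) ?_
  intro a _
  split_ifs
  · exact ContinuousLinearMap.norm_fst_le ℂ ℂ ℂ
  · exact ContinuousLinearMap.norm_snd_le ℂ ℂ ℂ

lemma monoM_apply (i j : ℕ) (p : ℂ × ℂ) :
    monoM (i + j) i (fun _ => p) = p.1 ^ i * p.2 ^ j := by
  have h : monoM (i + j) i (fun _ => p)
      = ∏ a : Fin (i + j), (fun n : ℕ => if n < i then p.1 else p.2) a := by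
    simp only [monoM, ContinuousMultilinearMap.compContinuousLinearMap_apply,
      ContinuousMultilinearMap.mkPiAlgebra_apply]
    refine Finset.prod_congr rfl fun a _ => ?_
    split_ifs <;> rfl
  rw [h, Fin.prod_univ_eq_prod_range (fun n : ℕ => if n < i then p.1 else p.2), Finset.prod_range_add]
  congr 1
  · rw [Finset.prod_congr rfl (g := fun _ => p.1)]
    · simp
    · intro a ha; simp [Finset.mem_range.1 ha]
  · simp

/-- Weights. -/
noncomputable def wt (ij : ℕ × ℕ) : ℝ := ((ij.1.factorial : ℝ) * ((2 * ij.2).factorial : ℝ))⁻¹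

lemma wt_nonneg (ij : ℕ × ℕ) : 0 ≤ wt ij := by unfold wt; positivity

lemma wt_sum_le (N : ℕ) (x y : ℝ) (hx : 0 ≤ x) (hy : 0 ≤ y) :
    ∑ ij ∈ Finset.HasAntidiagonal.antidiagonal N, wt ij * (x ^ ij.1 * y ^ ij.2) ≤
      (x + y) ^ N * (N.factorial : ℝ)⁻¹ := by
  rw [(Commute.all x y).add_pow', Finset.sum_mul]
  refine Finset.sum_le_sum ?_
  rintro ⟨i, j⟩ hij
  rw [Finset.HasAntidiagonal.mem_antidiagonal] at hij
  simp only at hij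
  subst hij
  have h1 : ((i + j).choose i : ℝ) * ((i + j).factorial : ℝ)⁻¹
      = ((i.factorial : ℝ) * (j.factorial : ℝ))⁻¹ := by
    have : ((i + j).choose i : ℝ) * i.factorial * j.factorial = (i + j).factorial := by
      rw [Nat.choose_symm_add]
      exact_mod_cast Nat.add_choose_mul_factorial_mul_factorial i j
    have := Nat.factorial_ne_zero i
    have := Nat.factorial_ne_zero j
    have := Nat.factorial_ne_zero (i + j)
    field_simp
    linarith
  have h2 : wt (i, j) ≤ ((i.factorial : ℝ) * (j.factorial : ℝ))⁻¹ := by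
    unfold wt
    have : (j.factorial : ℝ) ≤ ((2 * j).factorial : ℝ) := by
      exact_mod_cast Nat.factorial_le (by omega)
    simp only
    gcongr
  rw [← h1] at h2
  calc wt (i, j) * (x ^ i * y ^ j)
      ≤ (((i + j).choose i : ℝ) * ((i + j).factorial : ℝ)⁻¹) * (x ^ i * y ^ j) := by gcongr
    _ = _ := by rw [nsmul_eq_mul]; ring

/-- The power series of `Φ`. -/
noncomputable def qser (d : ℕ → ℂ) : FormalMultilinearSeries ℂ (ℂ × ℂ) ℂ := fun N =>
  d N • ∑ ij ∈ Finset.HasAntidiagonal.antidiagonal N, (wt ij : ℂ) • monoM N ij.1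

lemma qser_apply (d : ℕ → ℂ) (N : ℕ) (p : ℂ × ℂ) :
    qser d N (fun _ => p) =
      ∑ ij ∈ Finset.HasAntidiagonal.antidiagonal N, d (ij.1 + ij.2) * ((wt ij : ℂ) * (p.1 ^ ij.1 * p.2 ^ ij.2)) := by
  simp only [qser, smul_apply, sum_apply,
    smul_eq_mul, Finset.mul_sum]
  refine Finset.sum_congr rfl ?_
  rintro ⟨i, j⟩ hij
  rw [Finset.HasAntidiagonal.mem_antidiagonal] at hij
  simp only at hij
  subst hij
  rw [monoM_apply]

lemma qser_norm (d : ℕ → ℂ) (N : ℕ) :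
    ‖qser d N‖ ≤ ‖d N‖ * (2 ^ N * (N.factorial : ℝ)⁻¹) := by
  unfold qser
  rw [norm_smul]
  gcongr
  have h := wt_sum_le N 1 1 zero_le_one zero_le_one
  norm_num at h
  refine le_trans (norm_sum_le _ _) (le_trans (Finset.sum_le_sum fun ij _ => ?_) h)
  rw [norm_smul, Complex.norm_real, Real.norm_of_nonneg (wt_nonneg ij)]
  exact mul_le_of_le_one_right (wt_nonneg ij) (monoM_norm _ _)

lemma qser_radius (d : ℕ → ℂ)
    (hd : ∀ R : ℝ, 0 ≤ R → Summable fun N => ‖d N‖ * (R ^ N * (N.factorial : ℝ)⁻¹)) :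
    (qser d).radius = ⊤ := by
  apply FormalMultilinearSeries.radius_eq_top_of_summable_norm
  intro r
  refine Summable.of_nonneg_of_le (fun n => by positivity) (fun n => ?_)
    (hd (2 * r) (by positivity))
  calc ‖qser d n‖ * (r : ℝ) ^ n ≤ (‖d n‖ * (2 ^ n * (n.factorial : ℝ)⁻¹)) * (r : ℝ) ^ n := by
        gcongr; exact qser_norm d n
    _ = _ := by rw [mul_pow]; ring

lemma double_summable (d : ℕ → ℂ)
    (hd : ∀ R : ℝ, 0 ≤ R → Summable fun N => ‖d N‖ * (R ^ N * (N.factorial : ℝ)⁻¹)) (x y : ℂ) :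
    Summable fun ij : ℕ × ℕ => d (ij.1 + ij.2) * ((wt ij : ℂ) * (x ^ ij.1 * y ^ ij.2)) := by
  rw [← Finset.HasAntidiagonal.sigmaAntidiagonalEquivProd.summable_iff]
  apply Summable.of_norm
  rw [summable_sigma_of_nonneg (fun _ => norm_nonneg _)]
  refine ⟨fun N => (hasSum_fintype _).summable, ?_⟩
  refine Summable.of_nonneg_of_le (fun n => tsum_nonneg fun _ => norm_nonneg _) (fun N => ?_)
    (hd (‖x‖ + ‖y‖) (by positivity))
  rw [tsum_fintype]
  have h := wt_sum_le N ‖x‖ ‖y‖ (norm_nonneg _) (norm_nonneg _)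
  refine le_trans (le_of_eq ?_) (mul_le_mul_of_nonneg_left h (norm_nonneg (d N)))
  rw [Finset.mul_sum, ← Finset.sum_coe_sort (Finset.HasAntidiagonal.antidiagonal N)]
  refine Finset.sum_congr rfl ?_
  rintro ⟨⟨i, j⟩, hij⟩ _
  have hij' := hij
  rw [Finset.HasAntidiagonal.mem_antidiagonal] at hij'
  simp only at hij'
  simp only [Function.comp, Finset.HasAntidiagonal.sigmaAntidiagonalEquivProd_apply, norm_mul,
    norm_pow, Complex.norm_real, Real.norm_of_nonneg (wt_nonneg _), hij']

lemma double_hasSum (d : ℕ → ℂ)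
    (hd : ∀ R : ℝ, 0 ≤ R → Summable fun N => ‖d N‖ * (R ^ N * (N.factorial : ℝ)⁻¹)) (x y : ℂ) :
    HasSum (fun ij : ℕ × ℕ => d (ij.1 + ij.2) * ((wt ij : ℂ) * (x ^ ij.1 * y ^ ij.2)))
      ((qser d).sum (x, y)) := by
  have hs := (double_summable d hd x y).hasSum
  have h2 := (Finset.HasAntidiagonal.sigmaAntidiagonalEquivProd.hasSum_iff.2 hs).sigma
    (fun N => hasSum_fintype _)
  have h3 := (qser d).hasSum (x := (x, y)) (by rw [qser_radius d hd]; simp)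
  have h4 : (fun n => (qser d n) fun _ => (x, y)) = _ := funext fun N => by
    rw [qser_apply, ← Finset.sum_coe_sort (Finset.HasAntidiagonal.antidiagonal N)]
  rw [h4] at h3
  rw [h3.unique h2]; exact hs

/-- If `F` is entire caloric and even in its second variable, then
`F(t,z) = Φ(t, z²)` for some `Φ` analytic on all of `ℂ²` satisfying the degenerate
heat-type equation `∂_t Φ(t,μ) = 4μ ∂_μ² Φ(t,μ) + 2 ∂_μ Φ(t,μ)`. -/
theorem even_caloric_factors_through_square
    (F : ℂ × ℂ → ℂ) (hF : IsEntireCaloric F)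
    (heven : ∀ t z : ℂ, F (t, -z) = F (t, z)) :
    ∃ Φ : ℂ × ℂ → ℂ, AnalyticOnNhd ℂ Φ Set.univ ∧
      (∀ t z : ℂ, F (t, z) = Φ (t, z ^ 2)) ∧
      ∀ t μ : ℂ,
        deriv (fun s => Φ (s, μ)) t =
          4 * μ * iteratedDeriv 2 (fun w => Φ (t, w)) μ + 2 * deriv (fun w => Φ (t, w)) μ := by
  obtain ⟨hA, hheat⟩ := hF
  have hc : dirD (1, 0) F = dirD (0, 1) (dirD (0, 1) F) := by
    funext ⟨t, z⟩
    have := hheat t z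
    rwa [deriv_fst_eq hA, iter2_snd_eq hA] at this
  have hiter := fun k => caloric_iter k F hA hc
  set f : ℂ → ℂ := fun s => F (s, 0) with hf
  have hfd : Differentiable ℂ f := fun t => (hasDerivAt_fst hA t 0).differentiableAt
  set d : ℕ → ℂ := fun N => iteratedDeriv N f 0 with hd
  have hds : ∀ R : ℝ, 0 ≤ R → Summable fun N => ‖d N‖ * (R ^ N * (N.factorial : ℝ)⁻¹) := by
    intro R hR
    have h := (Complex.hasSum_taylorSeries_of_entire hfd 0 (R : ℂ)).summable.norm
    refine h.congr fun N => ?_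
    simp only [sub_zero, norm_smul, norm_inv, norm_pow, Complex.norm_real,
      Real.norm_of_nonneg hR, Complex.norm_natCast, hd]
    ring
  have hfk : ∀ k t, HasSum (fun n => (n.factorial : ℂ)⁻¹ * (t ^ n * d (n + k)))
      (iteratedDeriv k f t) := by
    intro k t
    have hdk : Differentiable ℂ (iteratedDeriv k f) :=
      hfd.contDiff.differentiable_iteratedDeriv (n := ⊤) k (by exact_mod_cast WithTop.coe_lt_top _)
    have h := Complex.hasSum_taylorSeries_of_entire hdk 0 t
    refine (congrArg (fun g => HasSum g _) (funext fun n => ?_)).mpr h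
    simp only [sub_zero, smul_eq_mul, hd, iteratedDeriv_eq_iterate, Function.iterate_add_apply]
  have hfac : ∀ t z : ℂ, F (t, z) = (qser d).sum (t, z ^ 2) := by
    intro t z
    have hg : Differentiable ℂ (fun w => F (t, w)) :=
      fun z => (hasDerivAt_snd hA t z).differentiableAt
    have h := Complex.hasSum_taylorSeries_of_entire hg 0 z
    have hinj : Function.Injective (fun k : ℕ => 2 * k) := fun a b h => by simpa using h
    rw [← hinj.hasSum_iff] at h
    · have h2 := (Equiv.prodComm ℕ ℕ).hasSum_iff.2 (double_hasSum d hds t (z ^ 2))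
      refine h.unique (h2.prod_fiberwise fun k => ?_)
      have h3 := (hfk k t).mul_left (((2 * k).factorial : ℂ)⁻¹ * z ^ (2 * k))
      have e : (((fun n : ℕ => (n.factorial : ℂ)⁻¹ • (z - 0) ^ n •
          iteratedDeriv n (fun w => F (t, w)) 0) ∘ fun k => 2 * k) k) =
          ((2 * k).factorial : ℂ)⁻¹ * z ^ (2 * k) * iteratedDeriv k f t := by
        simp only [Function.comp, sub_zero, smul_eq_mul]
        rw [hiter k t 0]
        ring
      rw [e]
      refine (congrArg (fun g => HasSum g _) (funext fun n => ?_)).mpr h3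
      · simp only [Function.comp, Equiv.prodComm_apply, Prod.swap, wt, ← pow_mul]
        push_cast
        rw [mul_inv]
        ring
    · intro m hm
      have hodd : Odd m := by
        rw [← Nat.not_even_iff_odd]
        rintro ⟨r, hr⟩
        exact hm ⟨r, by simp only; omega⟩
      have h1 := iteratedDeriv_comp_neg m (fun w => F (t, w)) 0
      simp only [heven, neg_zero, hodd.neg_one_pow] at h1
      have : iteratedDeriv m (fun w => F (t, w)) 0 = 0 := by
        rw [neg_smul, one_smul] at h1
        exact self_eq_neg.1 h1
      simp [this]
  have hΦ : AnalyticOnNhd ℂ (qser d).sum Set.univ := by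
    have h := ((qser d).hasFPowerSeriesOnBall (by rw [qser_radius d hds]; simp)).analyticOnNhd
    rw [qser_radius d hds] at h
    simpa using h
  refine ⟨(qser d).sum, hΦ, hfac, ?_⟩
  intro t μ
  obtain ⟨z, rfl⟩ : ∃ z : ℂ, z ^ 2 = μ := IsAlgClosed.exists_pow_nat_eq μ two_pos
  have hsq : ∀ w : ℂ, HasDerivAt (fun z : ℂ => z ^ 2) (2 * w) w := fun w => by
    simpa using hasDerivAt_pow 2 w
  have e1 : deriv (fun s => F (s, z)) t = deriv (fun s => (qser d).sum (s, z ^ 2)) t := by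
    simp only [hfac]
  have e2 : deriv (fun w => F (t, w)) = fun w => dirD (0, 1) (qser d).sum (t, w ^ 2) * (2 * w) := by
    funext w
    simp only [hfac]
    exact ((hasDerivAt_snd hΦ t (w ^ 2)).comp w (hsq w)).deriv
  have e3 : iteratedDeriv 2 (fun w => F (t, w)) z =
      dirD (0, 1) (dirD (0, 1) (qser d).sum) (t, z ^ 2) * (2 * z) * (2 * z)
        + dirD (0, 1) (qser d).sum (t, z ^ 2) * 2 := by
    rw [iteratedDeriv_succ, iteratedDeriv_one, e2]
    have h1 := (hasDerivAt_snd (dirD_analytic (0, 1) hΦ) t (z ^ 2)).comp z (hsq z)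
    have h2 : HasDerivAt (fun w : ℂ => 2 * w) 2 z := by
      simpa using (hasDerivAt_id z).const_mul (2 : ℂ)
    exact (h1.mul h2).deriv
  rw [← e1, hheat, e3, iter2_snd_eq hΦ, deriv_snd_eq hΦ]
  ring
end
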